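/- arXiv:1909.04266 — 6 statements merged into one kernel-verified Lean document; each statement's English description precedes it below -/
import Mathlib

section
/- Suppose n = s and the cost matrix M ∈ ℝ_{≥0}^{n×n} satisfies the triangle inequality M_{ik} ≤ M_{ij} + M_{jk} for all indices i, j, k. Then the Wasserstein distance satisfies the triangle inequality: for all p, q, r ∈ Σ_n, W(p,q) ≤ W(p,r) + W(r,q). -/
open Finset

noncomputable section

/-- The simplex Σ_n: nonnegative vectors in ℝ^n summing to 1. -/
def simplex (n : ℕ) : Set (Fin n → ℝ) :=
  {p | (∀ i, 0 ≤ p i) ∧ ∑ i, p i = 1}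

/-- The transport polytope U(p,q): nonnegative n×s matrices with row sums p
and column sums q. -/
def transportPolytope {n s : ℕ} (p : Fin n → ℝ) (q : Fin s → ℝ) :
    Set (Matrix (Fin n) (Fin s) ℝ) :=
  {T | (∀ i j, 0 ≤ T i j) ∧ (∀ i, ∑ j, T i j = p i) ∧ (∀ j, ∑ i, T i j = q j)}

/-- Frobenius inner product ⟨T,M⟩ = Σ_{i,j} T_{ij} M_{ij}. -/
def frob {n s : ℕ} (T M : Matrix (Fin n) (Fin s) ℝ) : ℝ :=
  ∑ i, ∑ j, T i j * M i j

/-- The entropy h(T) = −Σ_{i,j} T_{ij} log T_{ij} (Real.log 0 = 0, so 0 log 0 = 0). -/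
def entropy {n s : ℕ} (T : Matrix (Fin n) (Fin s) ℝ) : ℝ :=
  -∑ i, ∑ j, T i j * Real.log (T i j)

/-- The Wasserstein distance W(p,q) = inf_{T ∈ U(p,q)} ⟨T,M⟩. -/
def W {n s : ℕ} (M : Matrix (Fin n) (Fin s) ℝ) (p : Fin n → ℝ) (q : Fin s → ℝ) : ℝ :=
  sInf ((fun T => frob T M) '' transportPolytope p q)

/-- The smoothed Wasserstein distance W_γ(p,q) = inf_{T ∈ U(p,q)} ⟨T,M⟩ − γ h(T). -/
def Wsmooth {n s : ℕ} (γ : ℝ) (M : Matrix (Fin n) (Fin s) ℝ)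
    (p : Fin n → ℝ) (q : Fin s → ℝ) : ℝ :=
  sInf ((fun T => frob T M - γ * entropy T) '' transportPolytope p q)

theorem tp_nonempty {n : ℕ} (p q : Fin n → ℝ) (hp : p ∈ simplex n) (hq : q ∈ simplex n) :
    (transportPolytope p q).Nonempty := by
  refine ⟨fun i j => p i * q j, fun i j => mul_nonneg (hp.1 i) (hq.1 j), fun i => ?_, fun j => ?_⟩
  · rw [← Finset.mul_sum, hq.2, mul_one]
  · rw [← Finset.sum_mul, hp.2, one_mul]

theorem glue {n : ℕ} (M : Matrix (Fin n) (Fin n) ℝ)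
    (htri : ∀ i j k, M i k ≤ M i j + M j k)
    (p q r : Fin n → ℝ) (hr : r ∈ simplex n) (A B : Matrix (Fin n) (Fin n) ℝ)
    (hA : A ∈ transportPolytope p r) (hB : B ∈ transportPolytope r q) :
    ∃ T ∈ transportPolytope p q, frob T M ≤ frob A M + frob B M := by
  obtain ⟨hA0, hA1, hA2⟩ := hA
  obtain ⟨hB0, hB1, hB2⟩ := hB
  have key1 : ∀ i j, ∑ k, A i j * B j k / r j = A i j := by
    intro i j
    rw [← Finset.sum_div, ← Finset.mul_sum, hB1]
    by_cases h : r j = 0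
    · have h2 := hA2 j
      rw [h, Finset.sum_eq_zero_iff_of_nonneg (fun i _ => hA0 i j)] at h2
      rw [h2 i (Finset.mem_univ i)]; simp
    · field_simp
  have key2 : ∀ j k, ∑ i, A i j * B j k / r j = B j k := by
    intro j k
    rw [← Finset.sum_div, ← Finset.sum_mul, hA2]
    by_cases h : r j = 0
    · have h2 := hB1 j
      rw [h, Finset.sum_eq_zero_iff_of_nonneg (fun i _ => hB0 j i)] at h2
      rw [h2 k (Finset.mem_univ k)]; simp
    · field_simp
  have nn : ∀ i j k, 0 ≤ A i j * B j k / r j := fun i j k =>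
    div_nonneg (mul_nonneg (hA0 i j) (hB0 j k)) (hr.1 j)
  refine ⟨fun i k => ∑ j, A i j * B j k / r j,
    ⟨fun i k => Finset.sum_nonneg fun j _ => nn i j k, fun i => ?_, fun k => ?_⟩, ?_⟩
  · rw [Finset.sum_comm, ← hA1 i]
    exact Finset.sum_congr rfl fun j _ => key1 i j
  · rw [Finset.sum_comm, ← hB2 k]
    exact Finset.sum_congr rfl fun j _ => key2 j k
  · have eA : frob A M = ∑ i, ∑ k, ∑ j, A i j * B j k / r j * M i j := by
      unfold frob
      refine Finset.sum_congr rfl fun i _ => ?_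
      rw [Finset.sum_comm]
      refine Finset.sum_congr rfl fun j _ => ?_
      rw [← Finset.sum_mul, key1]
    have eB : frob B M = ∑ i, ∑ k, ∑ j, A i j * B j k / r j * M j k := by
      unfold frob
      rw [Finset.sum_comm, Finset.sum_comm (f := fun i k => ∑ j, A i j * B j k / r j * M j k)]
      refine Finset.sum_congr rfl fun k _ => ?_
      rw [Finset.sum_comm]
      refine Finset.sum_congr rfl fun j _ => ?_
      rw [← Finset.sum_mul, key2]
    rw [eA, eB]
    unfold frob
    simp only [← Finset.sum_add_distrib, Finset.sum_mul]
    refine Finset.sum_le_sum fun i _ => Finset.sum_le_sum fun k _ => Finset.sum_le_sum fun j _ => ?_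
    rw [← mul_add]
    exact mul_le_mul_of_nonneg_left (htri i j k) (nn i j k)

/-- if the cost matrix satisfies the triangle inequality, then so does W. -/
theorem wasserstein_triangle
    (n : ℕ) (hn : 0 < n)
    (M : Matrix (Fin n) (Fin n) ℝ) (hM : ∀ i j, 0 ≤ M i j)
    (htri : ∀ i j k, M i k ≤ M i j + M j k)
    (p q r : Fin n → ℝ) (hp : p ∈ simplex n) (hq : q ∈ simplex n) (hr : r ∈ simplex n) :
    W M p q ≤ W M p r + W M r q := by
  have ne1 := (tp_nonempty p r hp hr).image (fun T => frob T M)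
  have ne2 := (tp_nonempty r q hr hq).image (fun T => frob T M)
  have bdd : BddBelow ((fun T => frob T M) '' transportPolytope p q) := by
    refine ⟨0, ?_⟩
    rintro _ ⟨T, hT, rfl⟩
    exact Finset.sum_nonneg fun i _ => Finset.sum_nonneg fun j _ => mul_nonneg (hT.1 i j) (hM i j)
  have h : ∀ A ∈ transportPolytope p r, ∀ B ∈ transportPolytope r q,
      W M p q ≤ frob A M + frob B M := by
    intro A hA B hB
    obtain ⟨T, hT, hle⟩ := glue M htri p q r hr A B hA hB
    exact (csInf_le bdd ⟨T, hT, rfl⟩).trans hle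
  have h1 : W M p q - W M r q ≤ W M p r := by
    refine le_csInf ne1 ?_
    rintro _ ⟨A, hA, rfl⟩
    have h2 : W M p q - frob A M ≤ W M r q := by
      refine le_csInf ne2 ?_
      rintro _ ⟨B, hB, rfl⟩
      have := h A hA B hB
      simp only
      linarith
    simp only
    linarith
  linarith
end
end

section
/- For every γ > 0, every cost matrix M ∈ ℝ_{≥0}^{n×s} and every fixed p ∈ Σ_n, the function q ↦ W_γ(p,q) is strictly convex on the simplex Σ_s. -/
open Finset

noncomputable section

theorem aux_obj_eq {n s : ℕ} (γ : ℝ) (M T : Matrix (Fin n) (Fin s) ℝ) :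
    frob T M - γ * entropy T =
      ∑ i, ∑ j, (T i j * M i j + γ * (T i j * Real.log (T i j))) := by
  unfold frob entropy
  simp only [Finset.sum_add_distrib, Finset.mul_sum, mul_neg, sub_neg_eq_add]

theorem aux_exists_min {n s : ℕ} (γ : ℝ) (M : Matrix (Fin n) (Fin s) ℝ)
    (p : Fin n → ℝ) (hp : p ∈ simplex n) (q : Fin s → ℝ) (hq : q ∈ simplex s) :
    ∃ T ∈ transportPolytope p q, Wsmooth γ M p q = frob T M - γ * entropy T ∧
      ∀ T' ∈ transportPolytope p q, Wsmooth γ M p q ≤ frob T' M - γ * entropy T' := by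
  have hne : (transportPolytope p q).Nonempty := by
    refine ⟨fun i j => p i * q j, fun i j => mul_nonneg (hp.1 i) (hq.1 j), fun i => ?_,
      fun j => ?_⟩
    · rw [← Finset.mul_sum, hq.2, mul_one]
    · rw [← Finset.sum_mul, hp.2, one_mul]
  have hcl : IsClosed (transportPolytope p q) := by
    have h : transportPolytope p q = (⋂ i, ⋂ j, {T : Matrix (Fin n) (Fin s) ℝ | 0 ≤ T i j}) ∩
        ((⋂ i, {T : Matrix (Fin n) (Fin s) ℝ | ∑ j, T i j = p i}) ∩
          (⋂ j, {T : Matrix (Fin n) (Fin s) ℝ | ∑ i, T i j = q j})) := by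
      ext T
      simp [transportPolytope]
    rw [h]
    refine IsClosed.inter ?_ (IsClosed.inter ?_ ?_)
    · exact isClosed_iInter fun i => isClosed_iInter fun j =>
        isClosed_le continuous_const (continuous_apply_apply i j)
    · exact isClosed_iInter fun i => isClosed_eq
        (continuous_finset_sum _ fun j _ => continuous_apply_apply i j) continuous_const
    · exact isClosed_iInter fun j => isClosed_eq
        (continuous_finset_sum _ fun i _ => continuous_apply_apply i j) continuous_const
  have hK : IsCompact (Set.univ.pi fun i : Fin n => Set.univ.pi fun _ : Fin s =>
      Set.Icc (0 : ℝ) (p i)) :=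
    isCompact_univ_pi fun i => isCompact_univ_pi fun _ => isCompact_Icc
  have hcpt : IsCompact (transportPolytope p q) := by
    refine hK.of_isClosed_subset hcl ?_
    intro T hT i _ j _
    refine ⟨hT.1 i j, ?_⟩
    rw [← hT.2.1 i]
    exact Finset.single_le_sum (f := fun j => T i j) (fun j _ => hT.1 i j) (Finset.mem_univ j)
  have hcont : Continuous (fun T : Matrix (Fin n) (Fin s) ℝ => frob T M - γ * entropy T) := by
    simp only [aux_obj_eq]
    refine continuous_finset_sum _ fun i _ => continuous_finset_sum _ fun j _ => ?_
    have h1 : Continuous fun T : Matrix (Fin n) (Fin s) ℝ => T i j := continuous_apply_apply i j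
    exact (h1.mul continuous_const).add
      (continuous_const.mul (Real.continuous_mul_log.comp h1))
  obtain ⟨T, hT, hmin⟩ := hcpt.exists_isMinOn hne hcont.continuousOn
  have hleast : IsLeast ((fun T => frob T M - γ * entropy T) '' transportPolytope p q)
      (frob T M - γ * entropy T) := by
    refine ⟨⟨T, hT, rfl⟩, ?_⟩
    rintro _ ⟨T', hT', rfl⟩
    exact hmin hT'
  have he : Wsmooth γ M p q = frob T M - γ * entropy T := hleast.csInf_eq
  refine ⟨T, hT, he, fun T' hT' => ?_⟩
  rw [he]
  exact hmin hT'

/-- for γ > 0, q ↦ W_γ(p,q) is strictly convex on the simplex Σ_s. -/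
theorem wassersteinSmooth_strictConvexOn
    (n s : ℕ) (hn : 0 < n) (hs : 0 < s)
    (γ : ℝ) (hγ : 0 < γ)
    (M : Matrix (Fin n) (Fin s) ℝ) (hM : ∀ i j, 0 ≤ M i j)
    (p : Fin n → ℝ) (hp : p ∈ simplex n) :
    StrictConvexOn ℝ (simplex s) (fun q => Wsmooth γ M p q) := by
  refine ⟨?_, ?_⟩
  · intro x hx y hy a b ha hb hab
    refine ⟨fun i => ?_, ?_⟩
    · have h1 := mul_nonneg ha (hx.1 i)
      have h2 := mul_nonneg hb (hy.1 i)
      simpa using add_nonneg h1 h2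
    · simp only [Pi.add_apply, Pi.smul_apply, smul_eq_mul, Finset.sum_add_distrib,
        ← Finset.mul_sum, hx.2, hy.2, mul_one, hab]
  · intro x hx y hy hxy a b ha hb hab
    obtain ⟨A, hA, hAe, -⟩ := aux_exists_min γ M p hp x hx
    obtain ⟨B, hB, hBe, -⟩ := aux_exists_min γ M p hp y hy
    have hz : a • x + b • y ∈ simplex s := by
      refine ⟨fun i => ?_, ?_⟩
      · have h1 := mul_nonneg ha.le (hx.1 i)
        have h2 := mul_nonneg hb.le (hy.1 i)
        simpa using add_nonneg h1 h2
      · simp only [Pi.add_apply, Pi.smul_apply, smul_eq_mul, Finset.sum_add_distrib,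
          ← Finset.mul_sum, hx.2, hy.2, mul_one, hab]
    obtain ⟨-, -, -, hle⟩ := aux_exists_min γ M p hp _ hz
    let C : Matrix (Fin n) (Fin s) ℝ := fun i j => a * A i j + b * B i j
    have hC : C ∈ transportPolytope p (a • x + b • y) := by
      refine ⟨fun i j => add_nonneg (mul_nonneg ha.le (hA.1 i j)) (mul_nonneg hb.le (hB.1 i j)),
        fun i => ?_, fun j => ?_⟩
      · simp only [C, Finset.sum_add_distrib, ← Finset.mul_sum, hA.2.1, hB.2.1]
        rw [← add_mul, hab, one_mul]
      · simp only [C, Finset.sum_add_distrib, ← Finset.mul_sum, hA.2.2, hB.2.2]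
        simp
    have hAB : ∃ i j, A i j ≠ B i j := by
      by_contra! h
      apply hxy
      funext j
      rw [← hA.2.2 j, ← hB.2.2 j]
      exact Finset.sum_congr rfl fun i _ => h i j
    have hterm : ∀ i j, C i j * M i j + γ * (C i j * Real.log (C i j)) ≤
        a * (A i j * M i j + γ * (A i j * Real.log (A i j))) +
        b * (B i j * M i j + γ * (B i j * Real.log (B i j))) := by
      intro i j
      have h := Real.convexOn_mul_log.2 (Set.mem_Ici.2 (hA.1 i j)) (Set.mem_Ici.2 (hB.1 i j))
        ha.le hb.le hab
      simp only [smul_eq_mul] at h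
      have h' := mul_le_mul_of_nonneg_left h hγ.le
      simp only [C]
      linarith
    have hterm' : ∀ i j, A i j ≠ B i j → C i j * M i j + γ * (C i j * Real.log (C i j)) <
        a * (A i j * M i j + γ * (A i j * Real.log (A i j))) +
        b * (B i j * M i j + γ * (B i j * Real.log (B i j))) := by
      intro i j hij
      have h := Real.strictConvexOn_mul_log.2 (Set.mem_Ici.2 (hA.1 i j))
        (Set.mem_Ici.2 (hB.1 i j)) hij ha hb hab
      simp only [smul_eq_mul] at h
      have h' := mul_lt_mul_of_pos_left h hγ
      simp only [C]
      linarith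
    have hlt := hle C hC
    refine lt_of_le_of_lt hlt ?_
    simp only [smul_eq_mul]
    rw [hAe, hBe]
    simp only [aux_obj_eq]
    rw [Finset.mul_sum, Finset.mul_sum, ← Finset.sum_add_distrib]
    simp only [Finset.mul_sum (s := Finset.univ (α := Fin s)), ← Finset.sum_add_distrib]
    obtain ⟨i, j, hij⟩ := hAB
    refine Finset.sum_lt_sum (fun i _ => Finset.sum_le_sum fun j _ => hterm i j)
      ⟨i, Finset.mem_univ i, Finset.sum_lt_sum (fun j _ => hterm i j)
        ⟨j, Finset.mem_univ j, hterm' i j hij⟩⟩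
end
end

section
/- For every γ > 0, every cost matrix M ∈ ℝ_{≥0}^{n×s} and every p ∈ Σ_n, the Wasserstein filtering problem min_{q ∈ Σ_s} W_γ(p,q) admits a minimizer, and this minimizer is unique. -/
open Finset

noncomputable section

/-- The full objective. -/
def wfObj {n s : ℕ} (γ : ℝ) (M : Matrix (Fin n) (Fin s) ℝ) (T : Matrix (Fin n) (Fin s) ℝ) : ℝ :=
  frob T M - γ * entropy T

/-- Plans with prescribed row marginal. -/
def wfRow {n : ℕ} (s : ℕ) (p : Fin n → ℝ) : Set (Matrix (Fin n) (Fin s) ℝ) :=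
  {T | (∀ i j, 0 ≤ T i j) ∧ (∀ i, ∑ j, T i j = p i)}

lemma wfObj_eq {n s : ℕ} (γ : ℝ) (M T : Matrix (Fin n) (Fin s) ℝ) :
    wfObj γ M T = ∑ i, ∑ j, (T i j * M i j + γ * (T i j * Real.log (T i j))) := by
  simp only [wfObj, frob, entropy, Finset.sum_add_distrib, Finset.mul_sum, mul_neg, sub_neg_eq_add]

lemma wfObj_continuous {n s : ℕ} (γ : ℝ) (M : Matrix (Fin n) (Fin s) ℝ) :
    Continuous (wfObj γ M) := by
  have h : wfObj γ M = fun T => ∑ i, ∑ j, (T i j * M i j + γ * (T i j * Real.log (T i j))) :=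
    funext (wfObj_eq γ M)
  rw [h]
  refine continuous_finsetSum _ fun i _ => continuous_finsetSum _ fun j _ => ?_
  have hT : Continuous fun T : Matrix (Fin n) (Fin s) ℝ => T i j := continuous_id.matrix_elem i j
  exact (hT.mul continuous_const).add (continuous_const.mul (Real.continuous_mul_log.comp hT))

lemma wfRow_compact {n : ℕ} (s : ℕ) (p : Fin n → ℝ) : IsCompact (wfRow s p) := by
  have hc : IsCompact (Set.pi Set.univ fun i : Fin n => Set.pi Set.univ fun _ : Fin s =>
      Set.Icc (0 : ℝ) (p i)) :=
    isCompact_univ_pi fun i => isCompact_univ_pi fun j => isCompact_Icc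
  have hcl : IsClosed (wfRow s p) := by
    have hT : ∀ i j, Continuous fun T : Matrix (Fin n) (Fin s) ℝ => T i j :=
      fun i j => continuous_id.matrix_elem i j
    simp only [wfRow, Set.ofPred_and, Set.ofPred_forall]
    refine IsClosed.inter ?_ ?_
    · exact isClosed_iInter fun i => isClosed_iInter fun j => isClosed_le continuous_const (hT i j)
    · exact isClosed_iInter fun i =>
        isClosed_eq (continuous_finsetSum _ fun j _ => hT i j) continuous_const
  refine IsCompact.of_isClosed_subset hc hcl ?_
  rintro T ⟨h0, h1⟩ i - j -
  exact ⟨h0 i j, (h1 i) ▸ Finset.single_le_sum (f := fun j => T i j) (fun j _ => h0 i j)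
    (Finset.mem_univ j)⟩

lemma wfU_compact {n s : ℕ} (p : Fin n → ℝ) (q : Fin s → ℝ) :
    IsCompact (transportPolytope p q) := by
  have hT : ∀ i j, Continuous fun T : Matrix (Fin n) (Fin s) ℝ => T i j :=
    fun i j => continuous_id.matrix_elem i j
  have hcl : IsClosed {T : Matrix (Fin n) (Fin s) ℝ | ∀ j, ∑ i, T i j = q j} := by
    simp only [Set.ofPred_forall]
    exact isClosed_iInter fun j =>
        isClosed_eq (continuous_finsetSum _ fun i _ => hT i j) continuous_const
  have he : transportPolytope p q
      = wfRow s p ∩ {T : Matrix (Fin n) (Fin s) ℝ | ∀ j, ∑ i, T i j = q j} := by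
    ext T
    simp [transportPolytope, wfRow, and_assoc]
  rw [he]
  exact (wfRow_compact s p).inter_right hcl

lemma wfU_nonempty {n s : ℕ} {p : Fin n → ℝ} {q : Fin s → ℝ} (hp : p ∈ simplex n)
    (hq : q ∈ simplex s) : (transportPolytope p q).Nonempty := by
  refine ⟨fun i j => p i * q j, fun i j => mul_nonneg (hp.1 i) (hq.1 j), fun i => ?_, fun j => ?_⟩
  · rw [← Finset.mul_sum, hq.2, mul_one]
  · rw [← Finset.sum_mul, hp.2, one_mul]

/-- The infimum defining the smoothed distance is attained. -/
lemma wf_attained {n s : ℕ} (γ : ℝ) (M : Matrix (Fin n) (Fin s) ℝ)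
    {p : Fin n → ℝ} {q : Fin s → ℝ} (hp : p ∈ simplex n) (hq : q ∈ simplex s) :
    ∃ T ∈ transportPolytope p q, Wsmooth γ M p q = wfObj γ M T ∧
      ∀ T' ∈ transportPolytope p q, wfObj γ M T ≤ wfObj γ M T' := by
  obtain ⟨T, hT, hmin⟩ := (wfU_compact p q).exists_isMinOn (wfU_nonempty hp hq)
    (wfObj_continuous γ M).continuousOn
  refine ⟨T, hT, ?_, fun T' hT' => hmin hT'⟩
  refine IsLeast.csInf_eq ⟨⟨T, hT, rfl⟩, ?_⟩
  rintro _ ⟨T', hT', rfl⟩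
  exact hmin hT'

lemma wfObj_strict {n s : ℕ} {γ : ℝ} (hγ : 0 < γ) (M : Matrix (Fin n) (Fin s) ℝ)
    {A B : Matrix (Fin n) (Fin s) ℝ} (hA : ∀ i j, 0 ≤ A i j) (hB : ∀ i j, 0 ≤ B i j)
    (hne : A ≠ B) :
    2 * wfObj γ M (Matrix.of fun i j => (1/2 : ℝ) * A i j + (1/2) * B i j) < wfObj γ M A + wfObj γ M B := by
  rw [wfObj_eq, wfObj_eq, wfObj_eq]
  simp only [Matrix.of_apply, Finset.mul_sum, ← Finset.sum_add_distrib]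
  have hle : ∀ i j, 2 * (((1/2 : ℝ) * A i j + (1/2) * B i j) * M i j
      + γ * (((1/2 : ℝ) * A i j + (1/2) * B i j) *
        Real.log ((1/2 : ℝ) * A i j + (1/2) * B i j))) ≤
      A i j * M i j + γ * (A i j * Real.log (A i j)) +
        (B i j * M i j + γ * (B i j * Real.log (B i j))) := by
    intro i j
    have h := Real.convexOn_mul_log.2 (hA i j) (hB i j) (by norm_num : (0:ℝ) ≤ 1/2)
      (by norm_num : (0:ℝ) ≤ 1/2) (by norm_num)
    simp only [smul_eq_mul] at h
    have h2 := mul_le_mul_of_nonneg_left h hγ.le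
    linarith
  obtain ⟨i, j, hij⟩ : ∃ i j, A i j ≠ B i j := by
    by_contra! h
    exact hne (Matrix.ext h)
  refine Finset.sum_lt_sum (fun i _ => Finset.sum_le_sum fun j _ => hle i j) ⟨i, mem_univ i, ?_⟩
  refine Finset.sum_lt_sum (fun j _ => hle i j) ⟨j, mem_univ j, ?_⟩
  have h := Real.strictConvexOn_mul_log.2 (hA i j) (hB i j) hij (by norm_num : (0:ℝ) < 1/2)
    (by norm_num : (0:ℝ) < 1/2) (by norm_num)
  simp only [smul_eq_mul] at h
  have h2 := mul_lt_mul_of_pos_left h hγ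
  linarith

/-- for γ > 0, the Wasserstein filtering problem min_{q ∈ Σ_s} W_γ(p,q)
admits a unique minimizer. -/
theorem wasserstein_filtering_existsUnique_minimizer
    (n s : ℕ) (hn : 0 < n) (hs : 0 < s)
    (γ : ℝ) (hγ : 0 < γ)
    (M : Matrix (Fin n) (Fin s) ℝ) (hM : ∀ i j, 0 ≤ M i j)
    (p : Fin n → ℝ) (hp : p ∈ simplex n) :
    ∃! q : Fin s → ℝ,
      q ∈ simplex s ∧ ∀ q' ∈ simplex s, Wsmooth γ M p q ≤ Wsmooth γ M p q' := by
  have hne : (wfRow s p).Nonempty := by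
    have hq0 : (fun j : Fin s => if j = ⟨0, hs⟩ then (1:ℝ) else 0) ∈ simplex s := by
      refine ⟨fun j => ?_, ?_⟩
      · dsimp only
        split_ifs <;> norm_num
      · simp
    obtain ⟨T, hT⟩ := wfU_nonempty hp hq0
    exact ⟨T, hT.1, hT.2.1⟩
  obtain ⟨T, hT, hmin⟩ := (wfRow_compact s p).exists_isMinOn hne
    (wfObj_continuous γ M).continuousOn
  have hmin' : ∀ S ∈ wfRow s p, wfObj γ M T ≤ wfObj γ M S := fun S hS => hmin hS
  have hq : (fun j => ∑ i, T i j) ∈ simplex s := by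
    refine ⟨fun j => Finset.sum_nonneg fun i _ => hT.1 i j, ?_⟩
    rw [Finset.sum_comm]
    simp only [hT.2, hp.2]
  have hTU : T ∈ transportPolytope p (fun j => ∑ i, T i j) := ⟨hT.1, hT.2, fun _ => rfl⟩
  obtain ⟨S₀, -, hS₀, hS₀m⟩ := wf_attained γ M hp hq
  have hWle : Wsmooth γ M p (fun j => ∑ i, T i j) ≤ wfObj γ M T := hS₀ ▸ hS₀m T hTU
  refine ⟨fun j => ∑ i, T i j, ⟨hq, fun q' hq' => ?_⟩, ?_⟩
  · obtain ⟨S, hS, hSe, -⟩ := wf_attained γ M hp hq'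
    rw [hSe]
    exact hWle.trans (hmin' S ⟨hS.1, hS.2.1⟩)
  · rintro q ⟨hq1, hq2⟩
    obtain ⟨S, hS, hSe, -⟩ := wf_attained γ M hp hq1
    have hle : wfObj γ M S ≤ wfObj γ M T := hSe ▸ (hq2 _ hq).trans hWle
    have hST : S = T := by
      by_contra hne
      have h1 := wfObj_strict hγ M hS.1 hT.1 hne
      have h2 := hmin' (Matrix.of fun i j => (1/2 : ℝ) * S i j + (1/2) * T i j)
        ⟨fun i j => by have := hS.1 i j; have := hT.1 i j; rw [Matrix.of_apply]; positivity, fun i => by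
          simp only [Matrix.of_apply]
          rw [Finset.sum_add_distrib, ← Finset.mul_sum, ← Finset.mul_sum, hS.2.1 i, hT.2 i]
          ring⟩
      linarith
    subst hST
    funext j
    exact (hS.2.2 j).symm
end
end

section
/- Let γ > 0, let M ∈ ℝ_{≥0}^{n×s} be a cost matrix, and let p ∈ Σ_n have strictly positive entries. Let K = e^{−M/γ} entrywise, and for g ∈ ℝ^s let α = e^{g/γ} entrywise. Then the Legendre–Fenchel conjugate of H_p := q ↦ W_γ(p,q) satisfies, for every g ∈ ℝ^s, H_p*(g) := sup_{q ∈ Σ_s} (⟨g,q⟩ − W_γ(p,q)) = γ ( h(p) + ⟨p, log(Kα)⟩ ), where h(p) = −Σ_i p_i log p_i and log is applied entrywise to the (strictly positive) vector Kα. -/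
open Finset

noncomputable section

/-- K = e^{−M/γ}, entrywise. -/
def Kmat {n s : ℕ} (γ : ℝ) (M : Matrix (Fin n) (Fin s) ℝ) : Matrix (Fin n) (Fin s) ℝ :=
  fun i j => Real.exp (-M i j / γ)

/-- Legendre–Fenchel conjugate H_p*(g) = sup_{q ∈ Σ_s} (⟨g,q⟩ − W_γ(p,q)). -/
def Hstar {n s : ℕ} (γ : ℝ) (M : Matrix (Fin n) (Fin s) ℝ)
    (p : Fin n → ℝ) (g : Fin s → ℝ) : ℝ :=
  sSup ((fun q => (∑ j, g j * q j) - Wsmooth γ M p q) '' simplex s)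

/-- The gradient formula ∇H_p*(g) = α ⊙ Kᵀ (p ⊘ Kα), where α = e^{g/γ} entrywise. -/
def HstarGrad {n s : ℕ} (γ : ℝ) (M : Matrix (Fin n) (Fin s) ℝ)
    (p : Fin n → ℝ) (g : Fin s → ℝ) : Fin s → ℝ :=
  fun j => Real.exp (g j / γ) *
    Matrix.mulVec (Kmat γ M).transpose
      (fun i => p i / Matrix.mulVec (Kmat γ M) (fun j' => Real.exp (g j' / γ)) i) j

lemma aux_gibbs (a t : ℝ) (ha : 0 < a) (ht : 0 ≤ t) :
    t * (Real.log a - Real.log t) ≤ a - t := by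
  rcases ht.eq_or_lt with h | h
  · subst h; simp; exact ha.le
  · rw [← Real.log_div ha.ne' h.ne']
    have h1 := Real.log_le_sub_one_of_pos (div_pos ha h)
    have h2 := mul_le_mul_of_nonneg_left h1 h.le
    have h3 : t * (a / t - 1) = a - t := by field_simp
    linarith

lemma aux_identity {n s : ℕ} (γ : ℝ) (hγ : 0 < γ)
    (M : Matrix (Fin n) (Fin s) ℝ) (p : Fin n → ℝ) (hp' : ∀ i, 0 < p i)
    (g : Fin s → ℝ) (Z : Fin n → ℝ) (hZ : ∀ i, 0 < Z i)
    (q : Fin s → ℝ) (T : Matrix (Fin n) (Fin s) ℝ) (hT : T ∈ transportPolytope p q) :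
    (∑ j, g j * q j) - (frob T M - γ * entropy T) =
      γ * ((-∑ i, p i * Real.log (p i)) + ∑ i, p i * Real.log (Z i)) +
      γ * ∑ i, ∑ j, T i j * (Real.log (p i * (Real.exp (-M i j / γ) * Real.exp (g j / γ)) / Z i)
        - Real.log (T i j)) := by
  obtain ⟨h0, hr, hc⟩ := hT
  have e1 : ∑ j, g j * q j = ∑ i, ∑ j, T i j * g j := by
    rw [Finset.sum_comm]
    refine Finset.sum_congr rfl fun j _ => ?_
    rw [← hc j, Finset.mul_sum]
    exact Finset.sum_congr rfl fun i _ => mul_comm _ _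
  have e2 : ∑ i, p i * Real.log (p i) = ∑ i, ∑ j, T i j * Real.log (p i) := by
    refine Finset.sum_congr rfl fun i _ => ?_
    rw [← Finset.sum_mul, hr i]
  have e3 : ∑ i, p i * Real.log (Z i) = ∑ i, ∑ j, T i j * Real.log (Z i) := by
    refine Finset.sum_congr rfl fun i _ => ?_
    rw [← Finset.sum_mul, hr i]
  rw [e1, e2, e3, frob, entropy]
  simp only [mul_add, mul_neg, sub_neg_eq_add, Finset.mul_sum, ← Finset.sum_add_distrib,
    ← Finset.sum_sub_distrib, ← Finset.sum_neg_distrib]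
  refine Finset.sum_congr rfl fun i _ => Finset.sum_congr rfl fun j _ => ?_
  rw [Real.log_div (mul_pos (hp' i) (by positivity)).ne' (hZ i).ne',
    Real.log_mul (hp' i).ne' (by positivity), ← Real.exp_add, Real.log_exp]
  field_simp
  ring

/-- closed form of the Legendre–Fenchel conjugate of H_p = W_γ(p,·):
H_p*(g) = γ (h(p) + ⟨p, log(Kα)⟩), where K = e^{−M/γ} and α = e^{g/γ}. -/
theorem Hstar_closed_form
    (n s : ℕ) (hn : 0 < n) (hs : 0 < s)
    (γ : ℝ) (hγ : 0 < γ)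
    (M : Matrix (Fin n) (Fin s) ℝ) (hM : ∀ i j, 0 ≤ M i j)
    (p : Fin n → ℝ) (hp : p ∈ simplex n) (hp' : ∀ i, 0 < p i)
    (g : Fin s → ℝ) :
    Hstar γ M p g =
      γ * ((-∑ i, p i * Real.log (p i)) +
        ∑ i, p i *
          Real.log (Matrix.mulVec (Kmat γ M) (fun j => Real.exp (g j / γ)) i)) := by
  have hZ : ∀ i, 0 < Matrix.mulVec (Kmat γ M) (fun j => Real.exp (g j / γ)) i := by
    intro i
    have : Nonempty (Fin s) := ⟨⟨0, hs⟩⟩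
    have h : 0 < ∑ j, Real.exp (-M i j / γ) * Real.exp (g j / γ) :=
      Finset.sum_pos (fun j _ => mul_pos (Real.exp_pos _) (Real.exp_pos _))
        Finset.univ_nonempty
    exact h
  have hZd : ∀ i, ∑ j, Real.exp (-M i j / γ) * Real.exp (g j / γ) =
      Matrix.mulVec (Kmat γ M) (fun j => Real.exp (g j / γ)) i := fun i => rfl
  generalize Matrix.mulVec (Kmat γ M) (fun j => Real.exp (g j / γ)) = Z at hZ hZd ⊢
  set a : Matrix (Fin n) (Fin s) ℝ :=
    fun i j => p i * (Real.exp (-M i j / γ) * Real.exp (g j / γ)) / Z i with ha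
  have hapos : ∀ i j, 0 < a i j := fun i j =>
    div_pos (mul_pos (hp' i) (by positivity)) (hZ i)
  have harow : ∀ i, ∑ j, a i j = p i := by
    intro i
    have := (hZ i).ne'
    simp only [ha]
    rw [← Finset.sum_div, ← Finset.mul_sum, hZd]
    field_simp
  set V := γ * ((-∑ i, p i * Real.log (p i)) + ∑ i, p i * Real.log (Z i)) with hV
  have key : ∀ q T, T ∈ transportPolytope p q →
      (∑ j, g j * q j) - (frob T M - γ * entropy T) ≤ V := by
    intro q T hT
    rw [aux_identity γ hγ M p hp' g Z hZ q T hT]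
    have h1 : ∑ i, ∑ j, T i j * (Real.log (a i j) - Real.log (T i j)) ≤
        ∑ i, ∑ j, (a i j - T i j) :=
      Finset.sum_le_sum fun i _ => Finset.sum_le_sum fun j _ =>
        aux_gibbs _ _ (hapos i j) (hT.1 i j)
    have h2 : ∑ i, ∑ j, (a i j - T i j) = 0 := by
      refine Finset.sum_eq_zero fun i _ => ?_
      rw [Finset.sum_sub_distrib, harow, hT.2.1, sub_self]
    have h3 := mul_nonpos_of_nonneg_of_nonpos hγ.le (h1.trans h2.le)
    simp only [ha] at h3
    linarith
  have hle : ∀ q ∈ simplex s, (∑ j, g j * q j) - Wsmooth γ M p q ≤ V := by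
    intro q hq
    have : (∑ j, g j * q j) - V ≤ Wsmooth γ M p q := by
      refine le_csInf (Set.Nonempty.image _ ⟨fun i j => p i * q j, ?_, ?_, ?_⟩) ?_
      · exact fun i j => mul_nonneg (hp' i).le (hq.1 j)
      · intro i; rw [← Finset.mul_sum, hq.2, mul_one]
      · intro j; rw [← Finset.sum_mul, hp.2, one_mul]
      · rintro _ ⟨T, hT, rfl⟩
        have := key q T hT
        dsimp only
        linarith
    linarith
  have hmem : a ∈ transportPolytope p (fun j => ∑ i, a i j) :=
    ⟨fun i j => (hapos i j).le, harow, fun _ => rfl⟩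
  have hqs : (fun j => ∑ i, a i j) ∈ simplex s := by
    refine ⟨fun j => Finset.sum_nonneg fun i _ => (hapos i j).le, ?_⟩
    rw [Finset.sum_comm]
    simp only [harow]
    exact hp.2
  have hbdd : BddAbove ((fun q => (∑ j, g j * q j) - Wsmooth γ M p q) '' simplex s) := by
    refine ⟨V, ?_⟩
    rintro _ ⟨q, hq, rfl⟩
    exact hle q hq
  apply le_antisymm
  · refine csSup_le (Set.Nonempty.image _ ⟨_, hqs⟩) ?_
    rintro _ ⟨q, hq, rfl⟩
    exact hle q hq
  · refine le_trans ?_ (le_csSup hbdd ⟨_, hqs, rfl⟩)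
    have hW : Wsmooth γ M p (fun j => ∑ i, a i j) ≤ frob a M - γ * entropy a := by
      refine csInf_le ⟨(∑ j, g j * ∑ i, a i j) - V, ?_⟩ ⟨a, hmem, rfl⟩
      rintro _ ⟨T, hT, rfl⟩
      have := key _ T hT
      dsimp only at this ⊢
      linarith
    have hid := aux_identity γ hγ M p hp' g Z hZ _ a hmem
    have hz : ∑ i, ∑ j, a i j * (Real.log (p i * (Real.exp (-M i j / γ) *
        Real.exp (g j / γ)) / Z i) - Real.log (a i j)) = 0 := by
      refine Finset.sum_eq_zero fun i _ => Finset.sum_eq_zero fun j _ => ?_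
      simp [ha]
    rw [hz, mul_zero, add_zero, ← hV] at hid
    dsimp only at hid ⊢
    linarith
end
end

section
/- Let γ > 0, let M ∈ ℝ_{≥0}^{n×s}, and let p ∈ Σ_n have strictly positive entries. Let K = e^{−M/γ} entrywise. Then the function H_p*(g) = sup_{q ∈ Σ_s} (⟨g,q⟩ − W_γ(p,q)) is differentiable at every g ∈ ℝ^s, with gradient ∇H_p*(g) = α ⊙ Kᵀ (p ⊘ Kα), where α = e^{g/γ} entrywise, ⊙ denotes entrywise product and ⊘ entrywise division; moreover this gradient is the unique maximizer q ∈ Σ_s of ⟨g,q⟩ − W_γ(p,q). -/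
open Finset

noncomputable section

lemma aux_kl (a b : ℝ) (ha : 0 ≤ a) (ha1 : a ≤ 1) (hb : 0 < b) (hb1 : b ≤ 1) :
    a - b + (a - b) ^ 2 / 4 ≤ a * Real.log a - a * Real.log b := by
  rcases ha.eq_or_lt with h | h
  · subst h
    nlinarith
  · obtain ⟨x, hx, rfl⟩ : ∃ x : ℝ, 0 < x ∧ x ^ 2 = a :=
      ⟨Real.sqrt a, Real.sqrt_pos.2 h, Real.sq_sqrt ha⟩
    obtain ⟨y, hy, rfl⟩ : ∃ y : ℝ, 0 < y ∧ y ^ 2 = b :=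
      ⟨Real.sqrt b, Real.sqrt_pos.2 hb, Real.sq_sqrt hb.le⟩
    have hx1 : x ≤ 1 := by nlinarith
    have hy1 : y ≤ 1 := by nlinarith
    have h1 := Real.log_le_sub_one_of_pos (div_pos hy hx)
    rw [Real.log_div hy.ne' hx.ne'] at h1
    have h2 : x ^ 2 * (Real.log y - Real.log x) ≤ x * y - x ^ 2 := by
      calc _ ≤ x ^ 2 * (y / x - 1) := mul_le_mul_of_nonneg_left h1 (by positivity)
        _ = _ := by field_simp
    rw [Real.log_pow, Real.log_pow]
    have h3 : (x - y) ^ 2 * (x + y) ^ 2 ≤ (x - y) ^ 2 * 4 :=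
      mul_le_mul_of_nonneg_left (by nlinarith) (sq_nonneg _)
    push_cast
    nlinarith

def auxZ {n s : ℕ} (γ : ℝ) (M : Matrix (Fin n) (Fin s) ℝ) (g : Fin s → ℝ) (i : Fin n) : ℝ :=
  ∑ j, Real.exp ((g j - M i j) / γ)

def auxT {n s : ℕ} (γ : ℝ) (M : Matrix (Fin n) (Fin s) ℝ) (p : Fin n → ℝ) (g : Fin s → ℝ) :
    Matrix (Fin n) (Fin s) ℝ :=
  fun i j => p i * (Real.exp ((g j - M i j) / γ) / auxZ γ M g i)

def auxV {n s : ℕ} (γ : ℝ) (M : Matrix (Fin n) (Fin s) ℝ) (p : Fin n → ℝ) (g : Fin s → ℝ) : ℝ :=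
  ∑ i, (γ * p i) * (Real.log (auxZ γ M g i) - Real.log (p i))

lemma auxZ_pos {n s : ℕ} (hs : 0 < s) (γ : ℝ) (M : Matrix (Fin n) (Fin s) ℝ)
    (g : Fin s → ℝ) (i : Fin n) : 0 < auxZ γ M g i :=
  Finset.sum_pos (fun _ _ => Real.exp_pos _) ⟨⟨0, hs⟩, Finset.mem_univ _⟩

lemma aux_grad {n s : ℕ} (γ : ℝ) (M : Matrix (Fin n) (Fin s) ℝ)
    (p : Fin n → ℝ) (g : Fin s → ℝ) (j : Fin s) :
    HstarGrad γ M p g j = ∑ i, auxT γ M p g i j := by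
  have e : ∀ i j, Real.exp ((g j - M i j) / γ) = Real.exp (-M i j / γ) * Real.exp (g j / γ) := by
    intro i j
    rw [← Real.exp_add]; congr 1; ring
  simp only [HstarGrad, auxT, auxZ, Kmat, Matrix.mulVec, dotProduct, Matrix.transpose_apply, e,
    Finset.mul_sum]
  refine Finset.sum_congr rfl fun i _ => ?_
  ring

lemma auxT_row {n s : ℕ} (hs : 0 < s) (γ : ℝ) (M : Matrix (Fin n) (Fin s) ℝ)
    (p : Fin n → ℝ) (g : Fin s → ℝ) (i : Fin n) : ∑ j, auxT γ M p g i j = p i := by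
  have := (auxZ_pos hs γ M g i).ne'
  simp only [auxT]
  rw [← Finset.mul_sum, ← Finset.sum_div]
  change p i * (auxZ γ M g i / auxZ γ M g i) = p i
  rw [div_self this, mul_one]

lemma aux_obj {n s : ℕ} (hs : 0 < s) (γ : ℝ) (hγ : 0 < γ) (M : Matrix (Fin n) (Fin s) ℝ)
    (p : Fin n → ℝ) (hp' : ∀ i, 0 < p i) (g : Fin s → ℝ) (q : Fin s → ℝ)
    (T : Matrix (Fin n) (Fin s) ℝ) (hT : T ∈ transportPolytope p q) :
    (∑ j, g j * q j) - (frob T M - γ * entropy T) = auxV γ M p g -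
      γ * ∑ i, ∑ j, (T i j * Real.log (T i j) - T i j * Real.log (auxT γ M p g i j)) := by
  obtain ⟨h0, h1, h2⟩ := hT
  have e1 : ∑ j, g j * q j = ∑ i, ∑ j, T i j * g j := by
    rw [Finset.sum_comm]
    refine Finset.sum_congr rfl fun j _ => ?_
    rw [← h2 j, Finset.mul_sum]
    exact Finset.sum_congr rfl fun i _ => mul_comm _ _
  have e2 : auxV γ M p g = ∑ i, ∑ j, (γ * T i j) * (Real.log (auxZ γ M g i) - Real.log (p i)) := by
    refine Finset.sum_congr rfl fun i _ => ?_
    rw [← Finset.sum_mul, ← Finset.mul_sum, h1 i]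
  rw [e1, e2, frob, entropy]
  rw [mul_neg, sub_neg_eq_add]
  simp only [Finset.mul_sum, ← Finset.sum_add_distrib, ← Finset.sum_sub_distrib]
  refine Finset.sum_congr rfl fun i _ => Finset.sum_congr rfl fun j _ => ?_
  have hZ := auxZ_pos hs γ M g i
  rw [auxT, Real.log_mul (hp' i).ne' (by positivity), Real.log_div (by positivity) hZ.ne',
    Real.log_exp]
  field_simp
  ring

lemma aux_le {n s : ℕ} (hn : 0 < n) (hs : 0 < s) (γ : ℝ) (hγ : 0 < γ)
    (M : Matrix (Fin n) (Fin s) ℝ)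
    (p : Fin n → ℝ) (hp : p ∈ simplex n) (hp' : ∀ i, 0 < p i) (g : Fin s → ℝ) (q : Fin s → ℝ)
    (T : Matrix (Fin n) (Fin s) ℝ) (hT : T ∈ transportPolytope p q) (j : Fin s) :
    (∑ j, g j * q j) - (frob T M - γ * entropy T) ≤ auxV γ M p g -
      γ * ((q j - HstarGrad γ M p g j) ^ 2 / (4 * n)) := by
  rw [aux_obj hs γ hγ M p hp' g q T hT]
  obtain ⟨h0, h1, h2⟩ := hT
  have hpos : ∀ i j, 0 < auxT γ M p g i j := fun i j =>
    mul_pos (hp' i) (div_pos (Real.exp_pos _) (auxZ_pos hs γ M g i))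
  have hp1 : ∀ i, p i ≤ 1 := fun i => by
    rw [← hp.2]; exact Finset.single_le_sum (fun i _ => hp.1 i) (Finset.mem_univ i)
  have hT1 : ∀ i j, T i j ≤ 1 := fun i j => le_trans (by
    rw [← h1 i]; exact Finset.single_le_sum (fun j _ => h0 i j) (Finset.mem_univ j)) (hp1 i)
  have hS1 : ∀ i j, auxT γ M p g i j ≤ 1 := fun i j => le_trans (by
    rw [← auxT_row hs γ M p g i]
    exact Finset.single_le_sum (f := fun j => auxT γ M p g i j)
      (fun j _ => (hpos i j).le) (Finset.mem_univ j)) (hp1 i)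
  have k : ∑ i, ∑ j, (T i j - auxT γ M p g i j + (T i j - auxT γ M p g i j) ^ 2 / 4) ≤
      ∑ i, ∑ j, (T i j * Real.log (T i j) - T i j * Real.log (auxT γ M p g i j)) :=
    Finset.sum_le_sum fun i _ => Finset.sum_le_sum fun j _ =>
      aux_kl _ _ (h0 i j) (hT1 i j) (hpos i j) (hS1 i j)
  have k2 : ∑ i, (T i j - auxT γ M p g i j) ^ 2 / 4 ≤
      ∑ i, ∑ j, (T i j - auxT γ M p g i j + (T i j - auxT γ M p g i j) ^ 2 / 4) := by
    refine Finset.sum_le_sum fun i _ => ?_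
    rw [Finset.sum_add_distrib, Finset.sum_sub_distrib, h1, auxT_row hs, sub_self, zero_add]
    exact Finset.single_le_sum (f := fun j => (T i j - auxT γ M p g i j) ^ 2 / 4)
      (fun j _ => by positivity) (Finset.mem_univ j)
  have k3 : (q j - HstarGrad γ M p g j) ^ 2 / (4 * n) ≤
      ∑ i, (T i j - auxT γ M p g i j) ^ 2 / 4 := by
    have hn' : (0 : ℝ) < n := by exact_mod_cast hn
    rw [aux_grad, ← h2 j, ← Finset.sum_sub_distrib, ← Finset.sum_div]
    have := sq_sum_le_card_mul_sum_sq (s := (Finset.univ : Finset (Fin n)))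
      (f := fun i => T i j - auxT γ M p g i j)
    rw [Finset.card_univ, Fintype.card_fin] at this
    rw [div_le_div_iff₀ (by positivity) (by positivity)]
    linarith
  have := mul_le_mul_of_nonneg_left (k3.trans (k2.trans k)) hγ.le
  linarith

lemma aux_W {n s : ℕ} (hn : 0 < n) (hs : 0 < s) (γ : ℝ) (hγ : 0 < γ)
    (M : Matrix (Fin n) (Fin s) ℝ)
    (p : Fin n → ℝ) (hp : p ∈ simplex n) (hp' : ∀ i, 0 < p i) (g : Fin s → ℝ) (q : Fin s → ℝ)
    (hq : q ∈ simplex s) (j : Fin s) :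
    (∑ j, g j * q j) - Wsmooth γ M p q ≤ auxV γ M p g -
      γ * ((q j - HstarGrad γ M p g j) ^ 2 / (4 * n)) := by
  have : (∑ j, g j * q j) - (auxV γ M p g -
      γ * ((q j - HstarGrad γ M p g j) ^ 2 / (4 * n))) ≤ Wsmooth γ M p q := by
    refine le_csInf ?_ ?_
    · refine Set.Nonempty.image _ ⟨fun i j => p i * q j, ?_, ?_, ?_⟩
      · exact fun i j => mul_nonneg (hp.1 i) (hq.1 j)
      · intro i; rw [← Finset.mul_sum, hq.2, mul_one]
      · intro j; rw [← Finset.sum_mul, hp.2, one_mul]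
    · rintro _ ⟨T, hT, rfl⟩
      have := aux_le hn hs γ hγ M p hp hp' g q T hT j
      dsimp only
      linarith
  linarith

lemma aux_mem {n s : ℕ} (hs : 0 < s) (γ : ℝ) 
    (M : Matrix (Fin n) (Fin s) ℝ)
    (p : Fin n → ℝ) (hp : p ∈ simplex n) (hp' : ∀ i, 0 < p i) (g : Fin s → ℝ) :
    HstarGrad γ M p g ∈ simplex s ∧
      auxT γ M p g ∈ transportPolytope p (HstarGrad γ M p g) := by
  have hpos : ∀ i j, 0 < auxT γ M p g i j := fun i j =>
    mul_pos (hp' i) (div_pos (Real.exp_pos _) (auxZ_pos hs γ M g i))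
  refine ⟨⟨fun j => ?_, ?_⟩, fun i j => (hpos i j).le, auxT_row hs γ M p g, fun j =>
    (aux_grad γ M p g j).symm⟩
  · rw [aux_grad]; exact Finset.sum_nonneg fun i _ => (hpos i j).le
  · simp only [aux_grad]
    rw [Finset.sum_comm, ← hp.2]
    exact Finset.sum_congr rfl fun i _ => auxT_row hs γ M p g i

lemma aux_eq {n s : ℕ} (hn : 0 < n) (hs : 0 < s) (γ : ℝ) (hγ : 0 < γ)
    (M : Matrix (Fin n) (Fin s) ℝ)
    (p : Fin n → ℝ) (hp : p ∈ simplex n) (hp' : ∀ i, 0 < p i) (g : Fin s → ℝ) :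
    (∑ j, g j * HstarGrad γ M p g j) - Wsmooth γ M p (HstarGrad γ M p g) = auxV γ M p g := by
  obtain ⟨h1, h2⟩ := aux_mem hs γ M p hp hp' g
  apply le_antisymm
  · have := aux_W hn hs γ hγ M p hp hp' g _ h1 ⟨0, hs⟩
    simpa using this
  · have h3 := aux_obj hs γ hγ M p hp' g _ _ h2
    have h4 : Wsmooth γ M p (HstarGrad γ M p g) ≤
        frob (auxT γ M p g) M - γ * entropy (auxT γ M p g) := by
      refine csInf_le ⟨(∑ j, g j * HstarGrad γ M p g j) - auxV γ M p g, ?_⟩ ⟨_, h2, rfl⟩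
      rintro _ ⟨T, hT, rfl⟩
      have := aux_le hn hs γ hγ M p hp hp' g _ T hT ⟨0, hs⟩
      simp only [sub_self] at this
      norm_num at this
      dsimp only
      linarith
    simp only [sub_self, Finset.sum_const_zero, mul_zero, sub_zero] at h3
    linarith

lemma aux_Hstar {n s : ℕ} (hn : 0 < n) (hs : 0 < s) (γ : ℝ) (hγ : 0 < γ)
    (M : Matrix (Fin n) (Fin s) ℝ)
    (p : Fin n → ℝ) (hp : p ∈ simplex n) (hp' : ∀ i, 0 < p i) (g : Fin s → ℝ) :
    Hstar γ M p g = auxV γ M p g := by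
  refine IsGreatest.csSup_eq ⟨⟨_, (aux_mem hs γ M p hp hp' g).1, aux_eq hn hs γ hγ M p hp hp' g⟩, ?_⟩
  rintro _ ⟨q, hq, rfl⟩
  have := aux_W hn hs γ hγ M p hp hp' g q hq ⟨0, hs⟩
  have h : 0 ≤ γ * ((q ⟨0, hs⟩ - HstarGrad γ M p g ⟨0, hs⟩) ^ 2 / (4 * n)) := by positivity
  dsimp only
  linarith

lemma aux_deriv {n s : ℕ} (hs : 0 < s) (γ : ℝ) (hγ : 0 < γ)
    (M : Matrix (Fin n) (Fin s) ℝ) (p : Fin n → ℝ) (g : Fin s → ℝ) :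
    HasFDerivAt (auxV γ M p)
      (LinearMap.toContinuousLinearMap
        (∑ j, HstarGrad γ M p g j •
          (LinearMap.proj j : ((Fin s → ℝ) →ₗ[ℝ] ℝ)))) g := by
  have hZ : ∀ i, HasFDerivAt (fun g => auxZ γ M g i)
      (∑ j, Real.exp ((g j - M i j) / γ) •
        (γ⁻¹ • (ContinuousLinearMap.proj j : (Fin s → ℝ) →L[ℝ] ℝ))) g := by
    intro i
    refine HasFDerivAt.fun_sum fun j _ => ?_
    refine HasFDerivAt.exp ?_
    simp only [div_eq_mul_inv]
    exact ((hasFDerivAt_apply j g).sub_const _).mul_const _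
  have hV : HasFDerivAt (auxV γ M p)
      (∑ i, (γ * p i) • ((auxZ γ M g i)⁻¹ • (∑ j, Real.exp ((g j - M i j) / γ) •
        (γ⁻¹ • (ContinuousLinearMap.proj j : (Fin s → ℝ) →L[ℝ] ℝ))))) g := by
    refine HasFDerivAt.fun_sum fun i _ => ?_
    exact (((hZ i).log (auxZ_pos hs γ M g i).ne').sub_const _).const_mul _
  convert hV using 1
  ext v
  simp [aux_grad, auxT, Finset.mul_sum, Finset.sum_mul]
  try
    rw [Finset.sum_comm]
    refine Finset.sum_congr rfl fun i _ => Finset.sum_congr rfl fun j _ => ?_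
    field_simp

/-- H_p* is differentiable everywhere, with gradient
∇H_p*(g) = α ⊙ Kᵀ(p ⊘ Kα); moreover this gradient is the unique maximizer over Σ_s of
q ↦ ⟨g,q⟩ − W_γ(p,q). -/
theorem Hstar_hasGradient
    (n s : ℕ) (hn : 0 < n) (hs : 0 < s)
    (γ : ℝ) (hγ : 0 < γ)
    (M : Matrix (Fin n) (Fin s) ℝ) (hM : ∀ i j, 0 ≤ M i j)
    (p : Fin n → ℝ) (hp : p ∈ simplex n) (hp' : ∀ i, 0 < p i)
    (g : Fin s → ℝ) :
    HasFDerivAt (Hstar γ M p)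
      (LinearMap.toContinuousLinearMap
        (∑ j, HstarGrad γ M p g j •
          (LinearMap.proj j : ((Fin s → ℝ) →ₗ[ℝ] ℝ)))) g ∧
    HstarGrad γ M p g ∈ simplex s ∧
    (∑ j, g j * HstarGrad γ M p g j) - Wsmooth γ M p (HstarGrad γ M p g)
      = Hstar γ M p g ∧
    ∀ q ∈ simplex s,
      (∑ j, g j * q j) - Wsmooth γ M p q = Hstar γ M p g → q = HstarGrad γ M p g := by
  refine ⟨?_, (aux_mem hs γ M p hp hp' g).1, ?_, ?_⟩
  · have : Hstar γ M p = auxV γ M p := funext fun g => aux_Hstar hn hs γ hγ M p hp hp' g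
    rw [this]
    exact aux_deriv hs γ hγ M p g
  · rw [aux_Hstar hn hs γ hγ M p hp hp' g, aux_eq hn hs γ hγ M p hp hp' g]
  · intro q hq h
    rw [aux_Hstar hn hs γ hγ M p hp hp' g] at h
    funext j
    have h1 := aux_W hn hs γ hγ M p hp hp' g q hq j
    have hn' : (0 : ℝ) < n := by exact_mod_cast hn
    by_contra hne
    have h2 : 0 < (q j - HstarGrad γ M p g j) ^ 2 :=
      by
      have := sub_ne_zero.2 hne
      positivity
    have h3 : 0 < γ * ((q j - HstarGrad γ M p g j) ^ 2 / (4 * n)) := by positivity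
    linarith
end
end

section
/- (D step of Wasserstein Collaborative Filtering.) Let γ > 0, let M ∈ ℝ_{≥0}^{n×s} be a cost matrix, let p_1, …, p_m ∈ Σ_n have strictly positive entries, let K = e^{−M/γ} entrywise, and let Λ ∈ ℝ^{k×m} be fixed. Suppose D* ∈ ℝ^{s×k} minimizes D ↦ Σ_{u=1}^m W_γ(p_u, (DΛ)_u) over all D ∈ ℝ^{s×k} such that every column (DΛ)_u of DΛ lies in Σ_s. Then there exists G* ∈ ℝ^{s×m} minimizing G ↦ Σ_{u=1}^m H_{p_u}*(G_u), where H_{p_u}*(g) = sup_{q ∈ Σ_s}(⟨g,q⟩ − W_γ(p_u,q)) and G_u is the u-th column of G, over the set {G ∈ ℝ^{s×m} : G Λᵀ = 0}, such that for every u, (D*Λ)_u = α_u ⊙ Kᵀ(p_u ⊘ Kα_u) with α_u = e^{G_u*/γ} entrywise. Moreover, if Λ has full row rank, the minimizer D* is unique. -/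
open Finset

noncomputable section

/-- transport objective -/
def Fobj {n s : ℕ} (γ : ℝ) (M T : Matrix (Fin n) (Fin s) ℝ) : ℝ :=
  ∑ i, ∑ j, (T i j * M i j + γ * (T i j * Real.log (T i j)))

lemma Fobj_eq {n s : ℕ} (γ : ℝ) (M T : Matrix (Fin n) (Fin s) ℝ) :
    frob T M - γ * entropy T = Fobj γ M T := by
  simp only [frob, entropy, Fobj, Finset.sum_add_distrib, Finset.mul_sum]
  simp only [← Finset.mul_sum]
  ring

lemma tangent {x y : ℝ} (hx : 0 < x) (hy : 0 ≤ y) :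
    x * Real.log x + (Real.log x + 1) * (y - x) ≤ y * Real.log y ∧
    (y * Real.log y ≤ x * Real.log x + (Real.log x + 1) * (y - x) → y = x) := by
  rcases hy.eq_or_lt with rfl | hy
  · constructor
    · simp; linarith
    · intro h; simp at h; linarith
  · have h1 : Real.log (x / y) = Real.log x - Real.log y := Real.log_div hx.ne' hy.ne'
    have h3 : y * (x / y) = x := by field_simp
    constructor
    · have h2 := Real.log_le_sub_one_of_pos (div_pos hx hy)
      have := mul_le_mul_of_nonneg_left h2 hy.le
      rw [h1, mul_sub, mul_sub, h3] at this
      linarith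
    · intro h
      by_contra hne
      have h2 := Real.log_lt_sub_one_of_pos (div_pos hx hy)
        (by intro h; rw [div_eq_one_iff_eq hy.ne'] at h; exact hne h.symm)
      have := mul_lt_mul_of_pos_left h2 hy
      rw [h1, mul_sub, mul_sub, h3] at this
      linarith

lemma xlogx_ge {x : ℝ} (hx : 0 ≤ x) : -1 ≤ x * Real.log x := by
  have := (tangent one_pos hx).1
  simp at this
  linarith

lemma Fobj_ge {n s : ℕ} {γ : ℝ} (hγ : 0 < γ) {M T : Matrix (Fin n) (Fin s) ℝ}
    (hM : ∀ i j, 0 ≤ M i j) (hT : ∀ i j, 0 ≤ T i j) :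
    ∑ _i : Fin n, ∑ _j : Fin s, (-γ) ≤ Fobj γ M T := by
  refine Finset.sum_le_sum fun i _ => Finset.sum_le_sum fun j _ => ?_
  have := mul_le_mul_of_nonneg_left (xlogx_ge (hT i j)) hγ.le
  have := mul_nonneg (hT i j) (hM i j)
  linarith

lemma Wsmooth_le {n s : ℕ} {γ : ℝ} (hγ : 0 < γ) {M T : Matrix (Fin n) (Fin s) ℝ}
    (hM : ∀ i j, 0 ≤ M i j) {p : Fin n → ℝ} {q : Fin s → ℝ} (hT : T ∈ transportPolytope p q) :
    Wsmooth γ M p q ≤ Fobj γ M T := by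
  rw [← Fobj_eq]
  refine csInf_le ⟨∑ _i : Fin n, ∑ _j : Fin s, (-γ), ?_⟩ ⟨T, hT, rfl⟩
  rintro _ ⟨T', hT', rfl⟩
  simp only [Fobj_eq]
  exact Fobj_ge hγ hM hT'.1

lemma exists_plan {n s : ℕ} {γ : ℝ} (hγ : 0 < γ) {M : Matrix (Fin n) (Fin s) ℝ}
    (hM : ∀ i j, 0 ≤ M i j) {p : Fin n → ℝ} {q : Fin s → ℝ} (hp : p ∈ simplex n)
    (hq : q ∈ simplex s) :
    ∃ T ∈ transportPolytope p q, Wsmooth γ M p q = Fobj γ M T := by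
  have hne : (transportPolytope p q).Nonempty := by
    refine ⟨fun i j => p i * q j, fun i j => mul_nonneg (hp.1 i) (hq.1 j), fun i => ?_, fun j => ?_⟩
    · rw [← Finset.mul_sum, hq.2, mul_one]
    · rw [← Finset.sum_mul, hp.2, one_mul]
  have hcl : IsClosed (transportPolytope p q) := by
    have : transportPolytope p q = (⋂ i, ⋂ j, {T : Matrix (Fin n) (Fin s) ℝ | 0 ≤ T i j}) ∩
      ((⋂ i, {T : Matrix (Fin n) (Fin s) ℝ | ∑ j, T i j = p i}) ∩
       (⋂ j, {T : Matrix (Fin n) (Fin s) ℝ | ∑ i, T i j = q j})) := by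
      ext T; simp [transportPolytope]
    rw [this]
    refine IsClosed.inter ?_ (IsClosed.inter ?_ ?_)
    · exact isClosed_iInter fun i => isClosed_iInter fun j =>
        isClosed_le continuous_const (continuous_id.matrix_elem i j)
    · exact isClosed_iInter fun i => isClosed_eq
        (continuous_finsetSum _ fun j _ => continuous_id.matrix_elem i j) continuous_const
    · exact isClosed_iInter fun j => isClosed_eq
        (continuous_finsetSum _ fun i _ => continuous_id.matrix_elem i j) continuous_const
  have hcpt : IsCompact (transportPolytope p q) := by
    have hbox : IsCompact (Set.pi Set.univ fun _ : Fin n => Set.pi Set.univ fun _ : Fin s =>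
      Set.Icc (0:ℝ) 1) := isCompact_univ_pi fun _ => isCompact_univ_pi fun _ => isCompact_Icc
    refine IsCompact.of_isClosed_subset hbox hcl ?_
    intro T hT i _ j _
    refine ⟨hT.1 i j, ?_⟩
    have h1 : T i j ≤ ∑ j, T i j :=
      Finset.single_le_sum (f := fun j => T i j) (fun j _ => hT.1 i j) (Finset.mem_univ j)
    have h2 : p i ≤ ∑ i, p i := Finset.single_le_sum (fun j _ => hp.1 j) (Finset.mem_univ i)
    rw [hT.2.1 i] at h1
    rw [hp.2] at h2
    exact h1.trans h2
  have hcont : Continuous (Fobj γ M) := by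
    unfold Fobj
    refine continuous_finsetSum _ fun i _ => continuous_finsetSum _ fun j _ => ?_
    have h := continuous_id.matrix_elem (A := fun T : Matrix (Fin n) (Fin s) ℝ => T) i j
    exact (h.mul continuous_const).add (continuous_const.mul (Real.continuous_mul_log.comp h))
  obtain ⟨T, hT, hTm⟩ := hcpt.exists_isMinOn hne hcont.continuousOn
  refine ⟨T, hT, le_antisymm (Wsmooth_le hγ hM hT) ?_⟩
  refine le_csInf (hne.image _) ?_
  rintro _ ⟨T', hT', rfl⟩
  simp only [Fobj_eq]
  exact hTm hT'

lemma xlogx_conv {γ M x y ε : ℝ} (hγ : 0 < γ) (hx : 0 ≤ x) (hy : 0 < y) (h0 : 0 < ε) (h1 : ε < 1) :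
    (((1 - ε) * x + ε * y) * M + γ * (((1 - ε) * x + ε * y) * Real.log ((1 - ε) * x + ε * y))) ≤
    (x * M + γ * (x * Real.log x)) + ε * ((y * M + γ * (y * Real.log y)) -
      (x * M + γ * (x * Real.log x))) + ε * Real.log ε * (if x = 0 then γ * y else 0) := by
  split_ifs with h
  · subst h
    simp only [mul_zero, zero_add, zero_mul]
    rw [Real.log_mul h0.ne' hy.ne']
    apply le_of_eq; ring
  · have := Real.convexOn_mul_log.2 (Set.mem_Ici.2 hx) (Set.mem_Ici.2 hy.le)
      (sub_nonneg.2 h1.le) h0.le (sub_add_cancel 1 ε)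
    simp only [smul_eq_mul] at this
    have := mul_le_mul_of_nonneg_left this hγ.le
    linarith

lemma pos_of_min {ι : Type*} [Fintype ι] {γ : ℝ} (hγ : 0 < γ) (M x y : ι → ℝ)
    (hx : ∀ i, 0 ≤ x i) (hy : ∀ i, 0 < y i)
    (h : ∀ ε, 0 < ε → ε < 1 → ∑ i, (x i * M i + γ * (x i * Real.log (x i))) ≤
      ∑ i, (((1 - ε) * x i + ε * y i) * M i +
        γ * (((1 - ε) * x i + ε * y i) * Real.log ((1 - ε) * x i + ε * y i)))) :
    ∀ i, 0 < x i := by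
  by_contra hcon
  push Not at hcon
  obtain ⟨i0, hi0⟩ := hcon
  have hi0 : x i0 = 0 := le_antisymm hi0 (hx i0)
  set C := ∑ i, ((y i * M i + γ * (y i * Real.log (y i))) -
      (x i * M i + γ * (x i * Real.log (x i)))) with hC
  set w := ∑ i, (if x i = 0 then γ * y i else 0) with hw
  have hwpos : 0 < w := by
    refine Finset.sum_pos' (fun i _ => ?_) ⟨i0, Finset.mem_univ _, ?_⟩
    · split_ifs
      · exact (mul_pos hγ (hy i)).le
      · exact le_rfl
    · rw [if_pos hi0]; exact mul_pos hγ (hy i0)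
  set ε := Real.exp (-(|C| + 1) / w) with hε
  have h0 : 0 < ε := Real.exp_pos _
  have h1 : ε < 1 := by
    rw [hε, Real.exp_lt_one_iff]
    exact div_neg_of_neg_of_pos (by linarith [abs_nonneg C]) hwpos
  have h2 := (h ε h0 h1).trans
    (Finset.sum_le_sum fun i _ => xlogx_conv (M := M i) hγ (hx i) (hy i) h0 h1)
  rw [Finset.sum_add_distrib (g := fun i => ε * Real.log ε * (if x i = 0 then γ * y i else 0)),
    Finset.sum_add_distrib (g := fun i => ε * ((y i * M i + γ * (y i * Real.log (y i))) -
      (x i * M i + γ * (x i * Real.log (x i))))), ← Finset.mul_sum _ _ ε,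
    ← Finset.mul_sum _ _ (ε * Real.log ε), ← hC, ← hw] at h2
  have h3 : Real.log ε * w = -(|C| + 1) := by
    rw [hε, Real.log_exp]; field_simp
  have h4 : 0 ≤ ε * (C + Real.log ε * w) := by linarith
  rw [h3] at h4
  have := nonneg_of_mul_nonneg_right h4 h0
  linarith [le_abs_self C]

lemma stationary {ι : Type*} [Fintype ι] {γ : ℝ} (M x e : ι → ℝ)
    (hx : ∀ i, 0 < x i)
    (h : ∀ ε, (∀ i, 0 ≤ x i + ε * e i) → ∑ i, (x i * M i + γ * (x i * Real.log (x i))) ≤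
      ∑ i, ((x i + ε * e i) * M i + γ * ((x i + ε * e i) * Real.log (x i + ε * e i)))) :
    ∑ i, (M i + γ * (Real.log (x i) + 1)) * e i = 0 := by
  have hd : HasDerivAt (fun ε : ℝ => ∑ i, ((x i + ε * e i) * M i +
      γ * ((x i + ε * e i) * Real.log (x i + ε * e i))))
      (∑ i, (M i + γ * (Real.log (x i) + 1)) * e i) 0 := by
    refine HasDerivAt.fun_sum fun i _ => ?_
    have h1 : HasDerivAt (fun ε : ℝ => x i + ε * e i) (e i) 0 := by
      simpa using ((hasDerivAt_id (0:ℝ)).mul_const (e i)).const_add (x i)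
    have h2 := Real.hasDerivAt_mul_log (x := x i + 0 * e i) (by simpa using (hx i).ne')
    have h3 := (h1.mul_const (M i)).add ((h2.comp (0:ℝ) h1).const_mul γ)
    have h4 : (M i + γ * (Real.log (x i) + 1)) * e i =
        e i * M i + γ * ((Real.log (x i + 0 * e i) + 1) * e i) := by
      rw [zero_mul, add_zero]; ring
    rw [h4]
    exact h3
  refine IsLocalMin.hasDerivAt_eq_zero ?_ hd
  have hev : ∀ᶠ ε in nhds (0:ℝ), ∀ i, 0 ≤ x i + ε * e i := by
    refine Filter.eventually_all.2 fun i => ?_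
    have hc : ContinuousAt (fun ε : ℝ => x i + ε * e i) 0 := by fun_prop
    have := hc.eventually (lt_mem_nhds (a := 0) (by simpa using hx i))
    exact this.mono fun _ h => le_of_lt h
  filter_upwards [hev] with ε hε
  simpa using h ε hε

lemma core {n s m k : ℕ} (hn : 0 < n) (hs : 0 < s)
    {γ : ℝ} (hγ : 0 < γ) (M : Matrix (Fin n) (Fin s) ℝ)
    (p : Fin m → Fin n → ℝ) (hp : ∀ u, p u ∈ simplex n) (hp' : ∀ u i, 0 < p u i)
    (Λ : Matrix (Fin k) (Fin m) ℝ) (D : Matrix (Fin s) (Fin k) ℝ)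
    (T : Fin m → Matrix (Fin n) (Fin s) ℝ)
    (hT : ∀ u, T u ∈ transportPolytope (p u) (fun j => (D * Λ) j u))
    (hJ : ∀ (D' : Matrix (Fin s) (Fin k) ℝ) (T' : Fin m → Matrix (Fin n) (Fin s) ℝ),
      (∀ u, T' u ∈ transportPolytope (p u) (fun j => (D' * Λ) j u)) →
      ∑ u, Fobj γ M (T u) ≤ ∑ u, Fobj γ M (T' u)) :
    ∃ (G : Matrix (Fin s) (Fin m) ℝ) (a : Fin m → Fin n → ℝ),
      G * Λ.transpose = 0 ∧ (∀ u i j, 0 < T u i j) ∧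
      ∀ u i j, M i j + γ * (Real.log (T u i j) + 1) = a u i + G j u := by
  have hcol : ∀ u, ∑ j, (D * Λ) j u = 1 := by
    intro u
    rw [← (hp u).2]
    simp only [← (hT u).2.1, ← (hT u).2.2]
    rw [Finset.sum_comm]
  have hsR : (0 : ℝ) < s := by exact_mod_cast hs
  have hpos : ∀ u i j, 0 < T u i j := by
    have key := pos_of_min (ι := Fin m × Fin n × Fin s) hγ (fun t => M t.2.1 t.2.2)
      (fun t => T t.1 t.2.1 t.2.2) (fun t => p t.1 t.2.1 / s)
      (fun t => (hT t.1).1 _ _) (fun t => div_pos (hp' _ _) hsR) ?_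
    · exact fun u i j => key (u, i, j)
    intro ε h0 h1
    have := hJ ((1 - ε) • D + ε • Matrix.of (fun _ l => (∑ j, D j l) / s))
      (fun u => fun i j => (1 - ε) * T u i j + ε * (p u i / s)) ?_
    · simpa only [Fobj, Fintype.sum_prod_type] using this
    intro u
    refine ⟨fun i j => ?_, fun i => ?_, fun j => ?_⟩
    · have := (hT u).1 i j
      have := (hp' u i).le
      have : 0 ≤ 1 - ε := by linarith
      positivity
    · rw [Finset.sum_add_distrib, ← Finset.mul_sum, (hT u).2.1 i]
      simp
      field_simp
      ring
    · have h5 : (Matrix.of (fun (_ : Fin s) l => (∑ j, D j l) / (s : ℝ)) * Λ) j u = 1 / s := by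
        rw [← hcol u]
        simp only [Matrix.mul_apply, Matrix.of_apply]
        rw [Finset.sum_comm, Finset.sum_div]
        refine Finset.sum_congr rfl fun l _ => ?_
        rw [← Finset.sum_mul]; ring
      rw [Finset.sum_add_distrib, ← Finset.mul_sum, ← Finset.mul_sum, (hT u).2.2 j,
        ← Finset.sum_div, (hp u).2]
      simp only [Matrix.add_mul, Matrix.smul_mul, Matrix.add_apply, Matrix.smul_apply, smul_eq_mul]
      rw [h5]
  have hdir : ∀ (E : Fin m → Fin n → Fin s → ℝ) (Δ : Matrix (Fin s) (Fin k) ℝ),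
      (∀ u i, ∑ j, E u i j = 0) → (∀ u j, ∑ i, E u i j = (Δ * Λ) j u) →
      ∑ u, ∑ i, ∑ j, (M i j + γ * (Real.log (T u i j) + 1)) * E u i j = 0 := by
    intro E Δ hr hc
    have key := stationary (ι := Fin m × Fin n × Fin s) (γ := γ) (fun t => M t.2.1 t.2.2)
      (fun t => T t.1 t.2.1 t.2.2) (fun t => E t.1 t.2.1 t.2.2) (fun t => hpos _ _ _) ?_
    · simpa only [Fintype.sum_prod_type] using key
    intro ε hε
    have := hJ (D + ε • Δ) (fun u => fun i j => T u i j + ε * E u i j) ?_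
    · simpa only [Fobj, Fintype.sum_prod_type] using this
    intro u
    refine ⟨fun i j => hε (u, i, j), fun i => ?_, fun j => ?_⟩
    · rw [Finset.sum_add_distrib, ← Finset.mul_sum, (hT u).2.1 i, hr]; simp
    · rw [Finset.sum_add_distrib, ← Finset.mul_sum, (hT u).2.2 j, hc]
      simp [Matrix.add_mul]
  set c : Fin m → Fin n → Fin s → ℝ := fun u i j => M i j + γ * (Real.log (T u i j) + 1) with hcdef
  let i0 : Fin n := ⟨0, hn⟩
  let j0 : Fin s := ⟨0, hs⟩
  have hbox : ∀ u i j, c u i j - c u i j0 - (c u i0 j - c u i0 j0) = 0 := by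
    intro u i j
    have := hdir (fun u' i' j' => (if u' = u then 1 else 0) *
      (((if i' = i then 1 else 0) - (if i' = i0 then 1 else 0)) *
      ((if j' = j then 1 else 0) - (if j' = j0 then 1 else 0)))) 0
      (by intro u' i'; rw [← Finset.mul_sum, ← Finset.mul_sum]; simp)
      (by intro u' j'; rw [← Finset.mul_sum, ← Finset.sum_mul]; simp)
    change ∑ u', ∑ i', ∑ j', c u' i' j' * _ = 0 at this
    rw [← this]
    simp [mul_sub, sub_mul, Finset.sum_sub_distrib]
    ring
  refine ⟨Matrix.of fun j u => c u i0 j - c u i0 j0, fun u i => c u i j0, ?_, hpos, ?_⟩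
  · ext j l
    have := hdir (fun u' i' j' => Λ l u' * ((if i' = i0 then 1 else 0) *
      ((if j' = j then 1 else 0) - (if j' = j0 then 1 else 0))))
      (Matrix.of fun j' l' => ((if j' = j then 1 else 0) - (if j' = j0 then 1 else 0)) *
        (if l' = l then 1 else 0))
      (by intro u' i'; rw [← Finset.mul_sum, ← Finset.mul_sum]; simp)
      (by intro u' j'; rw [← Finset.mul_sum, ← Finset.sum_mul]
          simp [Matrix.mul_apply, mul_comm])
    change ∑ u', ∑ i', ∑ j', c u' i' j' * _ = 0 at this
    rw [Matrix.zero_apply, ← this, Matrix.mul_apply]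
    refine Finset.sum_congr rfl fun u _ => ?_
    simp [mul_sub, Finset.sum_sub_distrib]
    ring
  · intro u i j
    have := hbox u i j
    change c u i j = c u i j0 + (c u i0 j - c u i0 j0)
    linarith

lemma subgrad {n s : ℕ} {γ : ℝ} (hγ : 0 < γ) {M T T' : Matrix (Fin n) (Fin s) ℝ}
    {p a : Fin n → ℝ} {q q' g : Fin s → ℝ}
    (hT : T ∈ transportPolytope p q) (hT' : T' ∈ transportPolytope p q')
    (hpos : ∀ i j, 0 < T i j)
    (hc : ∀ i j, M i j + γ * (Real.log (T i j) + 1) = a i + g j) :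
    Fobj γ M T + (∑ j, g j * q' j - ∑ j, g j * q j) ≤ Fobj γ M T' ∧
    (Fobj γ M T' ≤ Fobj γ M T + (∑ j, g j * q' j - ∑ j, g j * q j) → T' = T) := by
  have e1 : ∀ (S : Matrix (Fin n) (Fin s) ℝ) (r : Fin s → ℝ), S ∈ transportPolytope p r →
      ∑ i, ∑ j, (a i + g j) * S i j = ∑ i, a i * p i + ∑ j, g j * r j := by
    intro S r hS
    simp only [add_mul, Finset.sum_add_distrib]
    congr 1
    · simp only [← Finset.mul_sum, hS.2.1]
    · rw [Finset.sum_comm]; simp only [← Finset.mul_sum, hS.2.2]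
  have e2 : Fobj γ M T + (∑ j, g j * q' j - ∑ j, g j * q j) =
      ∑ i, ∑ j, (T i j * M i j + γ * (T i j * Real.log (T i j)) +
        (a i + g j) * (T' i j - T i j)) := by
    simp only [mul_sub, Finset.sum_add_distrib (f := fun j => _ + γ * _),
      Finset.sum_sub_distrib]
    rw [Finset.sum_add_distrib, Finset.sum_sub_distrib, e1 _ _ hT, e1 _ _ hT', Fobj]
    ring
  have e3 : ∀ i j, T i j * M i j + γ * (T i j * Real.log (T i j)) +
        (a i + g j) * (T' i j - T i j) ≤ T' i j * M i j + γ * (T' i j * Real.log (T' i j)) := by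
    intro i j
    rw [← hc]
    have := mul_le_mul_of_nonneg_left (tangent (hpos i j) (hT'.1 i j)).1 hγ.le
    linarith
  rw [e2]
  refine ⟨Finset.sum_le_sum fun i _ => Finset.sum_le_sum fun j _ => e3 i j, fun h => ?_⟩
  have h1 := le_antisymm h (Finset.sum_le_sum fun i _ => Finset.sum_le_sum fun j _ => e3 i j)
  have h2 := (Finset.sum_eq_sum_iff_of_le
    (fun i _ => Finset.sum_le_sum fun j _ => e3 i j)).1 h1.symm
  ext i j
  have h3 := (Finset.sum_eq_sum_iff_of_le (fun j _ => e3 i j)).1 (h2 i (Finset.mem_univ _)) j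
    (Finset.mem_univ _)
  rw [← hc] at h3
  refine (tangent (hpos i j) (hT'.1 i j)).2 ?_
  refine le_of_mul_le_mul_left ?_ hγ
  linarith

lemma grad_eq {n s : ℕ} (hs : 0 < s) {γ : ℝ} (hγ : 0 < γ) {M T : Matrix (Fin n) (Fin s) ℝ}
    {p a : Fin n → ℝ} {q g : Fin s → ℝ}
    (hT : T ∈ transportPolytope p q) (hpos : ∀ i j, 0 < T i j)
    (hc : ∀ i j, M i j + γ * (Real.log (T i j) + 1) = a i + g j) :
    q = HstarGrad γ M p g := by
  have hf : ∀ i j, T i j = Real.exp (a i / γ - 1) * (Kmat γ M i j * Real.exp (g j / γ)) := by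
    intro i j
    rw [Kmat, ← Real.exp_add, ← Real.exp_add, ← Real.exp_log (hpos i j)]
    congr 1
    have := hc i j
    field_simp
    linarith
  have hp : ∀ i, p i = Real.exp (a i / γ - 1) *
      Matrix.mulVec (Kmat γ M) (fun j' => Real.exp (g j' / γ)) i := by
    intro i
    rw [← hT.2.1 i, Matrix.mulVec, dotProduct, Finset.mul_sum]
    exact Finset.sum_congr rfl fun j _ => hf i j
  have hKpos : ∀ i, 0 < Matrix.mulVec (Kmat γ M) (fun j' => Real.exp (g j' / γ)) i := by
    intro i
    rw [Matrix.mulVec, dotProduct]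
    haveI : Nonempty (Fin s) := ⟨⟨0, hs⟩⟩
    exact Finset.sum_pos (fun j _ => mul_pos (Real.exp_pos _) (Real.exp_pos _))
      Finset.univ_nonempty
  funext j
  rw [← hT.2.2 j, HstarGrad, Matrix.mulVec, dotProduct, Finset.mul_sum]
  refine Finset.sum_congr rfl fun i _ => ?_
  rw [hf, hp, mul_div_assoc, div_self (hKpos i).ne', Matrix.transpose_apply]
  ring

lemma Hstar_ge {n s : ℕ} {γ : ℝ} (hγ : 0 < γ) {M : Matrix (Fin n) (Fin s) ℝ}
    (hM : ∀ i j, 0 ≤ M i j) {p : Fin n → ℝ} (hp : p ∈ simplex n) {q g : Fin s → ℝ}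
    (hq : q ∈ simplex s) :
    ∑ j, g j * q j - Wsmooth γ M p q ≤ Hstar γ M p g := by
  refine le_csSup ⟨∑ j, |g j| - ∑ _i : Fin n, ∑ _j : Fin s, (-γ), ?_⟩ ⟨q, hq, rfl⟩
  rintro _ ⟨q', hq', rfl⟩
  obtain ⟨T, hT, hW⟩ := exists_plan hγ hM hp hq'
  have h1 := Fobj_ge hγ hM hT.1
  have h2 : ∑ j, g j * q' j ≤ ∑ j, |g j| := by
    refine Finset.sum_le_sum fun j _ => ?_
    have h3 : q' j ≤ 1 := by
      rw [← hq'.2]; exact Finset.single_le_sum (fun j _ => hq'.1 j) (Finset.mem_univ j)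
    calc g j * q' j ≤ |g j| * q' j := mul_le_mul_of_nonneg_right (le_abs_self _) (hq'.1 j)
      _ ≤ |g j| * 1 := mul_le_mul_of_nonneg_left h3 (abs_nonneg _)
      _ = _ := mul_one _
  simp only [hW]
  linarith

lemma Hstar_le {n s : ℕ} {γ : ℝ} (hγ : 0 < γ) {M T : Matrix (Fin n) (Fin s) ℝ}
    (hM : ∀ i j, 0 ≤ M i j) {p a : Fin n → ℝ} (hp : p ∈ simplex n) {q g : Fin s → ℝ}
    (hq : q ∈ simplex s) (hT : T ∈ transportPolytope p q) (hpos : ∀ i j, 0 < T i j)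
    (hc : ∀ i j, M i j + γ * (Real.log (T i j) + 1) = a i + g j) :
    Hstar γ M p g ≤ ∑ j, g j * q j - Fobj γ M T := by
  refine csSup_le ⟨_, q, hq, rfl⟩ ?_
  rintro _ ⟨q', hq', rfl⟩
  obtain ⟨T', hT', hW⟩ := exists_plan hγ hM hp hq'
  have := (subgrad hγ hT hT' hpos hc).1
  simp only [hW]
  linarith

lemma inner_zero {s m k : ℕ} {Λ : Matrix (Fin k) (Fin m) ℝ} {G : Matrix (Fin s) (Fin m) ℝ}
    (hG : G * Λ.transpose = 0) (D : Matrix (Fin s) (Fin k) ℝ) :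
    ∑ u, ∑ j, G j u * (D * Λ) j u = 0 := by
  have h : Matrix.trace (G * Λ.transpose * D.transpose) = 0 := by simp [hG]
  rw [Matrix.mul_assoc, ← Matrix.transpose_mul] at h
  rw [Finset.sum_comm, ← h]
  refine Finset.sum_congr rfl fun j _ => ?_
  rw [Matrix.diag_apply, Matrix.mul_apply]
  rfl

/-- D step of WCF: if D* minimizes D ↦ Σ_u W_γ(p_u, (DΛ)_u) subject to
each column of DΛ lying in Σ_s, then there is G* minimizing G ↦ Σ_u H_{p_u}*(G_u) over
{G : GΛᵀ = 0} with (D*Λ)_u = α_u ⊙ Kᵀ(p_u ⊘ Kα_u), α_u = e^{G*_u/γ} for every u; and if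
Λ has full row rank, the minimizer D* is unique. -/
theorem wcf_d_step
    (n s m k : ℕ) (hn : 0 < n) (hs : 0 < s) (hm : 0 < m) (hk : 0 < k)
    (γ : ℝ) (hγ : 0 < γ)
    (M : Matrix (Fin n) (Fin s) ℝ) (hM : ∀ i j, 0 ≤ M i j)
    (p : Fin m → Fin n → ℝ) (hp : ∀ u, p u ∈ simplex n) (hp' : ∀ u i, 0 < p u i)
    (Λ : Matrix (Fin k) (Fin m) ℝ)
    (D : Matrix (Fin s) (Fin k) ℝ)
    (hfeas : ∀ u, (fun j => (D * Λ) j u) ∈ simplex s)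
    (hmin : ∀ D' : Matrix (Fin s) (Fin k) ℝ,
      (∀ u, (fun j => (D' * Λ) j u) ∈ simplex s) →
      ∑ u, Wsmooth γ M (p u) (fun j => (D * Λ) j u) ≤
        ∑ u, Wsmooth γ M (p u) (fun j => (D' * Λ) j u)) :
    (∃ G : Matrix (Fin s) (Fin m) ℝ,
        G * Λ.transpose = 0 ∧
        (∀ G' : Matrix (Fin s) (Fin m) ℝ, G' * Λ.transpose = 0 →
          ∑ u, Hstar γ M (p u) (fun j => G j u) ≤
            ∑ u, Hstar γ M (p u) (fun j => G' j u)) ∧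
        ∀ u : Fin m, (fun j => (D * Λ) j u) = HstarGrad γ M (p u) (fun j => G j u)) ∧
    (Function.Injective (fun x : Fin k → ℝ => Matrix.vecMul x Λ) →
      ∀ D' : Matrix (Fin s) (Fin k) ℝ,
        (∀ u, (fun j => (D' * Λ) j u) ∈ simplex s) →
        (∀ D'' : Matrix (Fin s) (Fin k) ℝ,
          (∀ u, (fun j => (D'' * Λ) j u) ∈ simplex s) →
          ∑ u, Wsmooth γ M (p u) (fun j => (D' * Λ) j u) ≤
            ∑ u, Wsmooth γ M (p u) (fun j => (D'' * Λ) j u)) →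
        D' = D) := by
  choose T hT hTW using fun u => exists_plan hγ hM (hp u) (hfeas u)
  have hsimp : ∀ (D' : Matrix (Fin s) (Fin k) ℝ) (T' : Fin m → Matrix (Fin n) (Fin s) ℝ),
      (∀ u, T' u ∈ transportPolytope (p u) (fun j => (D' * Λ) j u)) →
      ∀ u, (fun j => (D' * Λ) j u) ∈ simplex s := by
    intro D' T' h u
    refine ⟨fun j => ?_, ?_⟩
    · rw [← (h u).2.2 j]; exact Finset.sum_nonneg fun i _ => (h u).1 i j
    · rw [← (hp u).2]
      simp only [← (h u).2.1, ← (h u).2.2]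
      rw [Finset.sum_comm]
  obtain ⟨G, a, hG, hpos, hc⟩ := core hn hs hγ M p hp hp' Λ D T hT (by
    intro D' T' h
    simp only [← hTW]
    exact (hmin D' (hsimp D' T' h)).trans (Finset.sum_le_sum fun u _ => Wsmooth_le hγ hM (h u)))
  refine ⟨⟨G, hG, fun G' hG' => ?_, fun u => grad_eq hs hγ (hT u) (hpos u) (hc u)⟩, ?_⟩
  · calc ∑ u, Hstar γ M (p u) (fun j => G j u)
        ≤ ∑ u, (∑ j, G j u * (D * Λ) j u - Fobj γ M (T u)) :=
          Finset.sum_le_sum fun u _ => Hstar_le hγ hM (hp u) (hfeas u) (hT u) (hpos u) (hc u)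
      _ = ∑ u, (∑ j, G' j u * (D * Λ) j u - Wsmooth γ M (p u) (fun j => (D * Λ) j u)) := by
          simp only [Finset.sum_sub_distrib, inner_zero hG D, inner_zero hG' D, hTW]
      _ ≤ _ := Finset.sum_le_sum fun u _ => Hstar_ge hγ hM (hp u) (hfeas u)
  · intro hinj D' hfeas' hmin'
    choose T' hT' hTW' using fun u => exists_plan hγ hM (hp u) (hfeas' u)
    have hle : ∑ u, Fobj γ M (T' u) ≤ ∑ u, Fobj γ M (T u) := by
      simp only [← hTW, ← hTW']; exact hmin' D hfeas
    have hsub := fun u => subgrad hγ (hT u) (hT' u) (hpos u) (hc u)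
    have hsum : ∑ u, (Fobj γ M (T u) + (∑ j, G j u * (D' * Λ) j u - ∑ j, G j u * (D * Λ) j u))
        = ∑ u, Fobj γ M (T u) := by
      simp only [Finset.sum_add_distrib, Finset.sum_sub_distrib, inner_zero hG, sub_zero, add_zero]
    have heq := (Finset.sum_eq_sum_iff_of_le (fun u _ => (hsub u).1)).1
      (le_antisymm (Finset.sum_le_sum fun u _ => (hsub u).1) (by rw [hsum]; exact hle))
    have hTT : ∀ u, T' u = T u := fun u => (hsub u).2 (heq u (Finset.mem_univ u)).ge
    have hprod : D' * Λ = D * Λ := by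
      ext j u
      have h1 := (hT u).2.2 j
      have h2 := (hT' u).2.2 j
      rw [hTT u] at h2
      exact h2.symm.trans h1
    have hrow : ∀ j, D' j = D j := by
      intro j
      apply hinj
      funext u
      exact congrFun (congrFun hprod j) u
    exact funext hrow
end
end
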